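/- Define L(k) = 2·K(k)·(2·E(k) − (1 − k²)·K(k)) for 0 ≤ k < 1. Then L is strictly increasing on [0, 1), L(0) = π²/2, and L(k) tends to +∞ as k tends to 1 from the left. -/

import Mathlib

/-!
Write `Δ = √(1 - k² sin² θ)` and `G = 2E - (1 - k²)K`, so that `L = 2KG`. The integrand of `G`
is not monotone in `k` pointwise, but it differs from `1 + k² cos² θ / (1 + Δ)` by the
`θ`-derivative of `k² sin θ cos θ / (1 + Δ)`, which vanishes at both end points. Hence
`G(k) = ∫₀^{π/2} (1 + k² cos² θ / (1 + Δ)) dθ` (`ellipticG_eq`), whose integrand is at least `1`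
and increases with `k`. The integrand of `K` is positive and increases with `k` as well, so `L` is
strictly increasing, and `L ≥ πK`.

For the limit, `Δ² = cos² θ + (1 - k²) sin² θ ≤ (π/2 - θ + √(1 - k²))²`, which bounds `K` from
below by `log ((π/2 + ε) / ε)` with `ε = √(1 - k²) → 0`.
-/

open Real Filter

/-- The complete elliptic integral of the first kind. -/
noncomputable def ellipticK (k : ℝ) : ℝ :=
  ∫ θ in (0:ℝ)..(Real.pi / 2), 1 / Real.sqrt (1 - k ^ 2 * Real.sin θ ^ 2)

/-- The complete elliptic integral of the second kind. -/
noncomputable def ellipticE (k : ℝ) : ℝ :=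
  ∫ θ in (0:ℝ)..(Real.pi / 2), Real.sqrt (1 - k ^ 2 * Real.sin θ ^ 2)

/-- `L(k) := 2K(k)(2E(k) − (1 − k²)K(k))`. -/
noncomputable def L (k : ℝ) : ℝ :=
  2 * ellipticK k * (2 * ellipticE k - (1 - k ^ 2) * ellipticK k)

lemma radicand_pos {k : ℝ} (h0 : 0 ≤ k) (h1 : k < 1) (θ : ℝ) :
    0 < 1 - k ^ 2 * Real.sin θ ^ 2 := by
  have hk : k ^ 2 < 1 := by nlinarith
  nlinarith [Real.sin_sq_le_one θ, sq_nonneg (Real.sin θ), sq_nonneg k]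

lemma radicand_anti {a b : ℝ} (h0 : 0 ≤ a) (hab : a ≤ b) (θ : ℝ) :
    Real.sqrt (1 - b ^ 2 * Real.sin θ ^ 2) ≤ Real.sqrt (1 - a ^ 2 * Real.sin θ ^ 2) := by
  gcongr

lemma continuous_delta (k : ℝ) :
    Continuous fun θ : ℝ => Real.sqrt (1 - k ^ 2 * Real.sin θ ^ 2) := by
  fun_prop

lemma continuous_integrandK {k : ℝ} (h0 : 0 ≤ k) (h1 : k < 1) :
    Continuous fun θ : ℝ => 1 / Real.sqrt (1 - k ^ 2 * Real.sin θ ^ 2) :=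
  continuous_const.div (continuous_delta k)
    fun θ => (Real.sqrt_pos.2 (radicand_pos h0 h1 θ)).ne'

lemma continuous_integrandG (k : ℝ) :
    Continuous fun θ : ℝ =>
      1 + k ^ 2 * Real.cos θ ^ 2 / (1 + Real.sqrt (1 - k ^ 2 * Real.sin θ ^ 2)) := by
  refine continuous_const.add (Continuous.div (by fun_prop) (by fun_prop) fun θ => ?_)
  positivity

/-- The `θ`-derivative of `k² sin θ cos θ / (1 + Δ)` is the integrand of `2E - (1 - k²)K` minus
the integrand `1 + k² cos² θ / (1 + Δ)`, which is monotone in `k`. -/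
lemma hasDerivAt_correction {k : ℝ} (h0 : 0 ≤ k) (h1 : k < 1) (θ : ℝ) :
    HasDerivAt
      (fun θ : ℝ => k ^ 2 * (Real.sin θ * Real.cos θ) /
        (1 + Real.sqrt (1 - k ^ 2 * Real.sin θ ^ 2)))
      ((2 * Real.sqrt (1 - k ^ 2 * Real.sin θ ^ 2)
          - (1 - k ^ 2) * (1 / Real.sqrt (1 - k ^ 2 * Real.sin θ ^ 2)))
        - (1 + k ^ 2 * Real.cos θ ^ 2 / (1 + Real.sqrt (1 - k ^ 2 * Real.sin θ ^ 2)))) θ := by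
  have hp := radicand_pos h0 h1 θ
  have hD : 0 < Real.sqrt (1 - k ^ 2 * Real.sin θ ^ 2) := Real.sqrt_pos.2 hp
  have hr : HasDerivAt (fun θ : ℝ => 1 - k ^ 2 * Real.sin θ ^ 2)
      (-(k ^ 2 * (2 * Real.sin θ * Real.cos θ))) θ := by
    refine ((((Real.hasDerivAt_sin θ).pow 2).const_mul (k ^ 2)).const_sub 1).congr_deriv ?_
    norm_num
  have hn : HasDerivAt (fun θ : ℝ => k ^ 2 * (Real.sin θ * Real.cos θ))
      (k ^ 2 * (Real.cos θ * Real.cos θ + Real.sin θ * -Real.sin θ)) θ :=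
    ((Real.hasDerivAt_sin θ).mul (Real.hasDerivAt_cos θ)).const_mul (k ^ 2)
  have hmain := hn.div ((hr.sqrt hp.ne').const_add 1) (by positivity)
  refine hmain.congr_deriv ?_
  have hsq := Real.sq_sqrt hp.le
  set D := Real.sqrt (1 - k ^ 2 * Real.sin θ ^ 2) with hDdef
  have hD1 : (1 + D) ≠ 0 := by positivity
  have hs2 : k ^ 2 * Real.sin θ ^ 2 = 1 - D ^ 2 := by linarith
  have hc2 : k ^ 2 * Real.cos θ ^ 2 = k ^ 2 - 1 + D ^ 2 := by
    linear_combination k ^ 2 * Real.sin_sq_add_cos_sq θ - hs2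
  have hA : k ^ 2 * (Real.cos θ * Real.cos θ + Real.sin θ * -Real.sin θ)
      = k ^ 2 - 2 + 2 * D ^ 2 := by
    linear_combination hc2 - hs2
  have hB : k ^ 2 * (Real.sin θ * Real.cos θ) *
      (-(k ^ 2 * (2 * Real.sin θ * Real.cos θ)) / (2 * D))
      = -((1 - D ^ 2) * (k ^ 2 - 1 + D ^ 2)) / D := by
    rw [← hs2, ← hc2]
    field_simp
  rw [hA, hB, hc2]
  field_simp
  ring

lemma ellipticG_eq {k : ℝ} (h0 : 0 ≤ k) (h1 : k < 1) :
    2 * ellipticE k - (1 - k ^ 2) * ellipticK k =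
      ∫ θ in (0:ℝ)..(Real.pi / 2),
        (1 + k ^ 2 * Real.cos θ ^ 2 / (1 + Real.sqrt (1 - k ^ 2 * Real.sin θ ^ 2))) := by
  have hE := (continuous_delta k).intervalIntegrable (μ := MeasureTheory.volume) 0 (Real.pi / 2)
  have hK := (continuous_integrandK h0 h1).intervalIntegrable
    (μ := MeasureTheory.volume) 0 (Real.pi / 2)
  have hG := (continuous_integrandG k).intervalIntegrable
    (μ := MeasureTheory.volume) 0 (Real.pi / 2)
  have hEK := (hE.const_mul 2).sub (hK.const_mul (1 - k ^ 2))
  have hint := intervalIntegral.integral_eq_sub_of_hasDerivAt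
    (fun θ _ => hasDerivAt_correction h0 h1 θ) (hEK.sub hG)
  rw [intervalIntegral.integral_sub hEK hG,
    intervalIntegral.integral_sub (hE.const_mul 2) (hK.const_mul _),
    intervalIntegral.integral_const_mul, intervalIntegral.integral_const_mul] at hint
  simp only [Real.cos_pi_div_two, Real.sin_zero, mul_zero, zero_mul, zero_div, sub_zero] at hint
  simp only [ellipticE, ellipticK]
  linarith

lemma ellipticK_mono {a b : ℝ} (h0 : 0 ≤ a) (hab : a ≤ b) (h1 : b < 1) :
    ellipticK a ≤ ellipticK b := by
  refine intervalIntegral.integral_mono_on (by positivity)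
    ((continuous_integrandK h0 (hab.trans_lt h1)).intervalIntegrable _ _)
    ((continuous_integrandK (h0.trans hab) h1).intervalIntegrable _ _) fun θ _ => ?_
  exact one_div_le_one_div_of_le (Real.sqrt_pos.2 (radicand_pos (h0.trans hab) h1 θ))
    (radicand_anti h0 hab θ)

lemma ellipticK_zero : ellipticK 0 = π / 2 := by simp [ellipticK]

lemma ellipticE_zero : ellipticE 0 = π / 2 := by simp [ellipticE]

lemma ellipticK_pos {k : ℝ} (h0 : 0 ≤ k) (h1 : k < 1) : 0 < ellipticK k := by
  have := ellipticK_mono le_rfl h0 h1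
  rw [ellipticK_zero] at this
  linarith [Real.pi_pos]

lemma ellipticG_strictMono {a b : ℝ} (h0 : 0 ≤ a) (hab : a < b) (h1 : b < 1) :
    2 * ellipticE a - (1 - a ^ 2) * ellipticK a <
      2 * ellipticE b - (1 - b ^ 2) * ellipticK b := by
  rw [ellipticG_eq h0 (hab.trans h1), ellipticG_eq (h0.trans hab.le) h1]
  have hsq : a ^ 2 < b ^ 2 := by gcongr
  refine intervalIntegral.integral_lt_integral_of_continuousOn_of_le_of_exists_lt
    (by positivity) (continuous_integrandG a).continuousOn (continuous_integrandG b).continuousOn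
    (fun θ _ => ?_) ⟨0, ⟨le_rfl, by positivity⟩, ?_⟩
  · have := radicand_anti h0 hab.le θ
    gcongr
  · norm_num
    linarith

lemma pi_div_two_le_ellipticG {k : ℝ} (h0 : 0 ≤ k) (h1 : k < 1) :
    π / 2 ≤ 2 * ellipticE k - (1 - k ^ 2) * ellipticK k := by
  rcases h0.eq_or_lt with rfl | h
  · rw [ellipticE_zero, ellipticK_zero]
    linarith
  · have := ellipticG_strictMono le_rfl h h1
    rw [ellipticE_zero, ellipticK_zero] at this
    linarith

/-- The integral of `1 / (π/2 + ε - θ)` with `ε = √(1 - k²)` bounds `K` from below, since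
`Δ ≤ cos θ + ε ≤ π/2 - θ + ε`. -/
lemma log_le_ellipticK {k : ℝ} (h0 : 0 ≤ k) (h1 : k < 1) :
    Real.log ((π / 2 + Real.sqrt (1 - k ^ 2)) / Real.sqrt (1 - k ^ 2)) ≤ ellipticK k := by
  have hk : 0 < 1 - k ^ 2 := by nlinarith
  have he : 0 < Real.sqrt (1 - k ^ 2) := Real.sqrt_pos.2 hk
  have hsq := Real.sq_sqrt hk.le
  set e := Real.sqrt (1 - k ^ 2) with hedef
  have hint : ∫ θ in (0:ℝ)..(π / 2), 1 / (π / 2 + e - θ) = Real.log ((π / 2 + e) / e) := by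
    rw [intervalIntegral.integral_comp_sub_left (fun x => 1 / x) (π / 2 + e),
      integral_one_div_of_pos (by linarith) (by linarith [Real.pi_pos])]
    congr 2 <;> ring
  rw [← hint]
  refine intervalIntegral.integral_mono_on (by positivity) ?_
    ((continuous_integrandK h0 h1).intervalIntegrable _ _) fun θ hθ => ?_
  · refine ContinuousOn.intervalIntegrable (ContinuousOn.div (by fun_prop) (by fun_prop) ?_)
    intro θ hθ
    rw [Set.uIcc_of_le (by positivity)] at hθ
    linarith [hθ.2]
  · refine one_div_le_one_div_of_le (Real.sqrt_pos.2 (radicand_pos h0 h1 θ)) ?_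
    have hc0 : 0 ≤ Real.cos θ :=
      Real.cos_nonneg_of_mem_Icc ⟨by linarith [hθ.1, Real.pi_pos], hθ.2⟩
    have hc : Real.cos θ ≤ π / 2 - θ := by
      rw [← Real.sin_pi_div_two_sub]
      exact Real.sin_le (by linarith [hθ.2])
    have hle : Real.sqrt (1 - k ^ 2 * Real.sin θ ^ 2) ≤ Real.cos θ + e := by
      refine Real.sqrt_le_iff.2 ⟨by linarith, ?_⟩
      have hs := Real.sin_sq_add_cos_sq θ
      nlinarith [mul_nonneg hc0 he.le, mul_nonneg hk.le (sq_nonneg (Real.cos θ))]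
    linarith

lemma tendsto_ellipticK : Tendsto ellipticK (nhdsWithin 1 (Set.Iio (1:ℝ))) atTop := by
  have hev : ∀ᶠ k : ℝ in nhdsWithin 1 (Set.Iio (1:ℝ)), 0 < k ∧ k < 1 := by
    filter_upwards [Ioo_mem_nhdsLT (zero_lt_one' ℝ)] with k hk using hk
  refine tendsto_atTop_mono' _ (f₁ := fun k : ℝ =>
    Real.log ((π / 2 + Real.sqrt (1 - k ^ 2)) / Real.sqrt (1 - k ^ 2)))
    (hev.mono fun k hk => log_le_ellipticK hk.1.le hk.2) ?_
  refine Real.tendsto_log_atTop.comp ?_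
  have hcont : Tendsto (fun k : ℝ => Real.sqrt (1 - k ^ 2)) (nhdsWithin 1 (Set.Iio 1))
      (nhds 0) := by
    have h : Continuous fun k : ℝ => Real.sqrt (1 - k ^ 2) := by fun_prop
    simpa using (h.tendsto 1).mono_left nhdsWithin_le_nhds
  have hpos : Tendsto (fun k : ℝ => Real.sqrt (1 - k ^ 2)) (nhdsWithin 1 (Set.Iio 1))
      (nhdsWithin 0 (Set.Ioi 0)) := by
    refine tendsto_nhdsWithin_iff.2 ⟨hcont, hev.mono fun k hk => ?_⟩
    exact Real.sqrt_pos.2 (by nlinarith [hk.1, hk.2])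
  have hnum : Tendsto (fun k : ℝ => π / 2 + Real.sqrt (1 - k ^ 2)) (nhdsWithin 1 (Set.Iio 1))
      (nhds (π / 2)) := by
    simpa using hcont.const_add (π / 2)
  simpa only [div_eq_mul_inv, Function.comp_def] using
    hnum.pos_mul_atTop (by positivity) (tendsto_inv_nhdsGT_zero.comp hpos)

/-- `L` is strictly increasing on `[0, 1)`, `L(0) = π²/2`, and
`L(k) → ∞` as `k → 1⁻`. -/
theorem L_strictMono_and_limits :
    StrictMonoOn L (Set.Ico (0:ℝ) 1) ∧ L 0 = π ^ 2 / 2 ∧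
      Tendsto L (nhdsWithin 1 (Set.Iio (1:ℝ))) atTop := by
  refine ⟨?_, ?_, ?_⟩
  · intro a ha b hb hab
    have hKa := ellipticK_pos ha.1 ha.2
    have hK := ellipticK_mono ha.1 hab.le hb.2
    have hG := ellipticG_strictMono ha.1 hab hb.2
    have hGa := pi_div_two_le_ellipticG ha.1 ha.2
    have hGb : 0 ≤ 2 * ellipticE b - (1 - b ^ 2) * ellipticK b := by
      linarith [Real.pi_pos]
    simp only [L]
    exact mul_lt_mul' (by linarith) hG (by linarith [Real.pi_pos]) (by linarith)
  · simp only [L, ellipticE_zero, ellipticK_zero]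
    ring
  · refine tendsto_atTop_mono' _ ?_ (tendsto_ellipticK.const_mul_atTop Real.pi_pos)
    filter_upwards [Ioo_mem_nhdsLT (zero_lt_one' ℝ)] with k hk
    have hK := ellipticK_pos hk.1.le hk.2
    have hG := pi_div_two_le_ellipticG hk.1.le hk.2
    simp only [L]
    nlinarith [mul_le_mul_of_nonneg_left hG hK.le]
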